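/- Let x > 0 be real, set q = e^{−π/x} and u = −q^{1/3} χ(q)/χ³(q³) (with q^{1/3} the real cube root). Then F_{(3,1)}(x) = −(2π/(9x)) · log( (1 + u³) / (1 − 8u³) ). -/

import Mathlib

open Filter

/-- Ramanujan's theta function `χ(q) = ∏_{m=0}^∞ (1 + q^{2m+1})`. -/
noncomputable def chi (q : ℝ) : ℝ := ∏' m : ℕ, (1 + q ^ (2 * m + 1))

/-!
The inner sum is the partial fraction expansion of `π / sin` on the imaginary axis, so the
`n`-th row equals `(π / x) (-1)ⁿ / (c sinh (π c / x))` with `c = 3 n + 1`. Expanding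
`log χ(q) = ∑ log (1 + q^(2j+1))` in powers of `q` and interchanging the sums gives
`4 log χ(e^{-t}) = ∑_{k ≠ 0} (-1)^(k+1) / (k sinh (k t))`. The terms are even in `k`, so the sum
over the residue class `k ≡ 1 (mod 3)` is half of what remains after removing the multiples of
`3`, and the double series equals `(2π / x) (log χ(q) - log χ(q³) / 3)`.

It remains to see that `(1 + u³) / (1 - 8 u³) = χ(q³)³ / χ(q)⁹`, which for `A = χ(q)`, `B = χ(q³)`
is Schläfli's modular equation `B¹² + q A¹² = (A B)⁹ - 8 q (A B)³`. It follows from the theta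
identities `θ₃⁴ = θ₄⁴ + θ₂⁴` and `θ₃(q) θ₃(q³) = θ₄(q) θ₄(q³) + θ₂(q) θ₂(q³)`, obtained by
splitting the lattice `ℤ²` by parity and turned into product identities by the Jacobi triple
product, which is the limit of the finite `q`-binomial theorem.
-/

open Topology

section FiniteProducts

/-- The `q`-Pochhammer symbol `(a; q)_n = ∏_{j < n} (1 - a q^j)`. -/
def qPochhammer {R : Type*} [CommRing R] (a q : R) (n : ℕ) : R :=
  ∏ j ∈ Finset.range n, (1 - a * q ^ j)

/-- The Gaussian binomial coefficient, as the quotient `(q; q)_n / ((q; q)_k (q; q)_{n-k})`.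
The quotient is meaningful when `k ≤ n` and no power `q, q², …, qⁿ` equals `1`. -/
def qBinomial {K : Type*} [Field K] (q : K) (n k : ℕ) : K :=
  qPochhammer q q n / (qPochhammer q q k * qPochhammer q q (n - k))

lemma qPochhammer_succ {R : Type*} [CommRing R] (a q : R) (n : ℕ) :
    qPochhammer a q (n + 1) = qPochhammer a q n * (1 - a * q ^ n) :=
  Finset.prod_range_succ _ _

lemma qPochhammer_add {R : Type*} [CommRing R] (a q : R) (m n : ℕ) :
    qPochhammer a q (m + n) = qPochhammer a q m * qPochhammer (a * q ^ m) q n := by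
  simp only [qPochhammer, Finset.prod_range_add, pow_add, mul_assoc]

variable {K : Type*} [Field K] {q : K}

lemma qPochhammer_eq_mul_qPochhammer_inv {a : K} (ha : a ≠ 0) (hq : q ≠ 0) (n : ℕ) :
    qPochhammer a q n =
      (-a) ^ n * q ^ n.choose 2 * qPochhammer (a⁻¹ * q ^ (1 - n : ℤ)) q n := by
  have hreflect : qPochhammer (a⁻¹ * q ^ (1 - n : ℤ)) q n =
      ∏ j ∈ Finset.range n, (1 - a⁻¹ * (q ^ j)⁻¹) := by
    rw [qPochhammer, ← Finset.prod_range_reflect]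
    refine Finset.prod_congr rfl fun j hj ↦ ?_
    have hexp : (1 - n : ℤ) + (n - 1 - j : ℕ) = -(j : ℤ) := by
      have := Finset.mem_range.mp hj
      omega
    rw [mul_assoc, ← zpow_natCast, ← zpow_add₀ hq, hexp, zpow_neg, zpow_natCast]
  have hfactor (j : ℕ) : 1 - a * q ^ j = -a * q ^ j * (1 - a⁻¹ * (q ^ j)⁻¹) := by
    field_simp
    ring
  rw [hreflect, qPochhammer, Finset.prod_congr rfl fun j _ ↦ hfactor j, Finset.prod_mul_distrib,
    Finset.prod_mul_distrib, Finset.prod_const, Finset.card_range, Finset.prod_pow_eq_pow_sum,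
    Finset.sum_range_id, Nat.choose_two_right]

lemma qPochhammer_self_ne_zero (hq : ∀ n ≠ 0, q ^ n ≠ 1) (n : ℕ) : qPochhammer q q n ≠ 0 :=
  Finset.prod_ne_zero_iff.mpr fun j _ ↦ by
    rw [← pow_succ', sub_ne_zero]
    exact (hq _ j.succ_ne_zero).symm

lemma qBinomial_zero_right (hq : ∀ n ≠ 0, q ^ n ≠ 1) (n : ℕ) : qBinomial q n 0 = 1 := by
  have := qPochhammer_self_ne_zero hq n
  simp [qBinomial, qPochhammer.eq_def q q 0, this]

lemma qBinomial_self (hq : ∀ n ≠ 0, q ^ n ≠ 1) (n : ℕ) : qBinomial q n n = 1 := by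
  have := qPochhammer_self_ne_zero hq n
  simp [qBinomial, qPochhammer.eq_def q q 0, this]

lemma qBinomial_succ_succ (hq : ∀ n ≠ 0, q ^ n ≠ 1) {n k : ℕ} (hk : k < n) :
    qBinomial q (n + 1) (k + 1) = qBinomial q n (k + 1) + q ^ (n - k) * qBinomial q n k := by
  obtain ⟨d, rfl⟩ := Nat.exists_eq_add_of_lt hk
  have hsub_succ : k + d + 1 + 1 - (k + 1) = d + 1 := by omega
  have hsub_left : k + d + 1 - (k + 1) = d := by omega
  have hsub_right : k + d + 1 - k = d + 1 := by omega
  have hpow (m : ℕ) : 1 - q * q ^ m ≠ 0 := by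
    rw [← pow_succ', sub_ne_zero]
    exact (hq _ m.succ_ne_zero).symm
  have hk := qPochhammer_self_ne_zero hq k
  have hd := qPochhammer_self_ne_zero hq d
  have hpow_k := hpow k
  have hpow_d := hpow d
  simp only [qBinomial, hsub_succ, hsub_left, hsub_right, qPochhammer_succ q q k,
    qPochhammer_succ q q d, qPochhammer_succ q q (k + d + 1)]
  field_simp
  ring

theorem qPochhammer_neg_eq_sum_qBinomial (hq : ∀ n ≠ 0, q ^ n ≠ 1) (x : K) (n : ℕ) :
    qPochhammer (-x) q n =
      ∑ k ∈ Finset.range (n + 1), q ^ k.choose 2 * x ^ k * qBinomial q n k := by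
  induction n with
  | zero => simp [qPochhammer, qBinomial]
  | succ n ih =>
    have hchoose (k : ℕ) : (k + 1).choose 2 = k + k.choose 2 := by
      rw [Nat.choose_succ_succ' k 1, Nat.choose_one_right]
    have hpascal : ∀ k ∈ Finset.range n,
        q ^ (k + 1).choose 2 * x ^ (k + 1) * qBinomial q (n + 1) (k + 1) =
          q ^ (k + 1).choose 2 * x ^ (k + 1) * qBinomial q n (k + 1) +
            q ^ k.choose 2 * x ^ k * qBinomial q n k * (x * q ^ n) := by
      intro k hk
      have hkn : k < n := Finset.mem_range.mp hk
      have hpow : q ^ n = q ^ k * q ^ (n - k) := by rw [← pow_add, Nat.add_sub_cancel' hkn.le]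
      rw [qBinomial_succ_succ hq hkn, hchoose, hpow]
      ring
    calc qPochhammer (-x) q (n + 1)
        = ∑ k ∈ Finset.range (n + 1), q ^ k.choose 2 * x ^ k * qBinomial q n k +
            ∑ k ∈ Finset.range (n + 1), q ^ k.choose 2 * x ^ k * qBinomial q n k * (x * q ^ n) := by
          rw [qPochhammer_succ, ih, ← Finset.sum_mul]
          ring
      _ = ∑ k ∈ Finset.range (n + 2), q ^ k.choose 2 * x ^ k * qBinomial q (n + 1) k := by
          rw [Finset.sum_range_succ' _ n, Finset.sum_range_succ (n := n),
            Finset.sum_range_succ' _ (n + 1), Finset.sum_range_succ _ n,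
            Finset.sum_congr rfl hpascal, Finset.sum_add_distrib, hchoose]
          simp only [qBinomial_zero_right hq, qBinomial_self hq]
          ring

lemma sq_pow_choose_two (q : K) (k : ℕ) : (q ^ 2) ^ k.choose 2 = q ^ ((k : ℤ) ^ 2 - k) := by
  have hexp : ((2 * k.choose 2 : ℕ) : ℤ) = (k : ℤ) ^ 2 - k := by
    rw [Nat.choose_two_right, Nat.mul_div_cancel' (Nat.even_mul_pred_self k).two_dvd]
    cases k <;> simp
    ring
  rw [← pow_mul, ← zpow_natCast, hexp]

lemma qPochhammer_neg_mul_zpow_sq {z : K} (hq : q ≠ 0) (hz : z ≠ 0) (n : ℕ) :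
    qPochhammer (-(z * q ^ (1 - 2 * n : ℤ))) (q ^ 2) (2 * n) =
      z ^ n * q ^ (-(n : ℤ) ^ 2) *
        (qPochhammer (-(z * q)) (q ^ 2) n * qPochhammer (-(z⁻¹ * q)) (q ^ 2) n) := by
  have ha : -(z * q ^ (1 - 2 * n : ℤ)) ≠ 0 := neg_ne_zero.mpr (mul_ne_zero hz (zpow_ne_zero _ hq))
  have hupper : -(z * q ^ (1 - 2 * n : ℤ)) * (q ^ 2) ^ n = -(z * q) := by
    rw [← pow_mul, neg_mul, mul_assoc, ← zpow_natCast, ← zpow_add₀ hq]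
    simp
  have hlower : (-(z * q ^ (1 - 2 * n : ℤ)))⁻¹ * (q ^ 2) ^ (1 - n : ℤ) = -(z⁻¹ * q) := by
    rw [inv_neg, mul_inv, ← zpow_neg, ← zpow_natCast q 2, ← zpow_mul, neg_mul, mul_assoc,
      ← zpow_add₀ hq]
    have hexp : -(1 - 2 * n : ℤ) + (2 : ℕ) * (1 - n) = 1 := by
      push_cast
      ring
    rw [hexp, zpow_one]
  have hscale : (z * q ^ (1 - 2 * n : ℤ)) ^ n * (q ^ 2) ^ n.choose 2 =
      z ^ n * q ^ (-(n : ℤ) ^ 2) := by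
    rw [sq_pow_choose_two, mul_pow, ← zpow_natCast (q ^ _), ← zpow_mul, mul_assoc,
      ← zpow_add₀ hq]
    congr 2
    ring
  rw [two_mul n, qPochhammer_add, hupper, qPochhammer_eq_mul_qPochhammer_inv ha (pow_ne_zero 2 hq),
    hlower, neg_neg, hscale]
  ring

theorem qPochhammer_mul_qPochhammer_inv_eq_sum {z : K} (hq : q ≠ 0) (hq' : ∀ n ≠ 0, q ^ n ≠ 1)
    (hz : z ≠ 0) (n : ℕ) :
    qPochhammer (-(z * q)) (q ^ 2) n * qPochhammer (-(z⁻¹ * q)) (q ^ 2) n =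
      ∑ l ∈ Finset.Icc (-(n : ℤ)) n,
        q ^ (l ^ 2) * z ^ l * qBinomial (q ^ 2) (2 * n) (n + l).toNat := by
  have hq_sq (m : ℕ) (hm : m ≠ 0) : (q ^ 2) ^ m ≠ 1 := by
    rw [← pow_mul]
    exact hq' _ (mul_ne_zero two_ne_zero hm)
  have hterm (k : ℕ) : (q ^ 2) ^ k.choose 2 * (z * q ^ (1 - 2 * n : ℤ)) ^ k =
      z ^ n * q ^ (-(n : ℤ) ^ 2) * (q ^ ((k - n : ℤ) ^ 2) * z ^ (k - n : ℤ)) := by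
    have hzpow : z ^ k = z ^ n * z ^ (k - n : ℤ) := by
      rw [← zpow_natCast, ← zpow_natCast, ← zpow_add₀ hz, add_sub_cancel]
    have hqpow : q ^ ((k : ℤ) ^ 2 - k) * q ^ ((1 - 2 * n : ℤ) * k) =
        q ^ (-(n : ℤ) ^ 2) * q ^ ((k - n : ℤ) ^ 2) := by
      rw [← zpow_add₀ hq, ← zpow_add₀ hq]
      congr 1
      ring
    rw [sq_pow_choose_two, mul_pow, ← zpow_natCast (q ^ _), ← zpow_mul, hzpow]
    linear_combination z ^ n * z ^ (k - n : ℤ) * hqpow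
  refine mul_left_cancel₀ (mul_ne_zero (pow_ne_zero n hz) (zpow_ne_zero (-(n : ℤ) ^ 2) hq)) ?_
  rw [← qPochhammer_neg_mul_zpow_sq hq hz, qPochhammer_neg_eq_sum_qBinomial hq_sq, Finset.mul_sum]
  refine Finset.sum_nbij' (fun k ↦ (k : ℤ) - n) (fun l ↦ (n + l).toNat) ?_ ?_ ?_ ?_ fun k _ ↦ ?_
  iterate 4
    intro i hi
    simp only [Finset.mem_range, Finset.mem_Icc] at hi ⊢
    omega
  rw [hterm, mul_assoc, show (n + (k - n : ℤ)).toNat = k by omega]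

end FiniteProducts

section InfiniteProducts

/-- The infinite `q`-Pochhammer symbol `(a; q)_∞ = ∏_{j ≥ 0} (1 - a q^j)`, meaningful for
`‖q‖ < 1`. -/
noncomputable def qPochhammerInf {𝕜 : Type*} [NormedField 𝕜] (a q : 𝕜) : 𝕜 :=
  ∏' j : ℕ, (1 - a * q ^ j)

variable {𝕜 : Type*} [NormedField 𝕜] {q : 𝕜}

lemma norm_pow_lt_one (hq : ‖q‖ < 1) {n : ℕ} (hn : n ≠ 0) : ‖q ^ n‖ < 1 := by
  rw [norm_pow]
  exact pow_lt_one₀ (norm_nonneg q) hq hn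

lemma pow_ne_one_of_norm_lt_one (hq : ‖q‖ < 1) {n : ℕ} (hn : n ≠ 0) : q ^ n ≠ 1 := fun h ↦ by
  simpa [h] using norm_pow_lt_one hq hn

lemma summable_norm_neg_mul_pow (hq : ‖q‖ < 1) (a : 𝕜) :
    Summable fun j : ℕ ↦ ‖-(a * q ^ j)‖ := by
  simpa only [norm_neg, norm_mul, norm_pow] using
    (summable_geometric_of_lt_one (norm_nonneg q) hq).mul_left ‖a‖

variable [CompleteSpace 𝕜]

lemma multipliable_one_sub_mul_pow (hq : ‖q‖ < 1) (a : 𝕜) :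
    Multipliable fun j : ℕ ↦ 1 - a * q ^ j := by
  simpa only [sub_eq_add_neg] using
    multipliable_one_add_of_summable (summable_norm_neg_mul_pow hq a)

lemma tendsto_qPochhammer (hq : ‖q‖ < 1) (a : 𝕜) :
    Tendsto (qPochhammer a q) atTop (𝓝 (qPochhammerInf a q)) :=
  (multipliable_one_sub_mul_pow hq a).hasProd.tendsto_prod_nat

lemma qPochhammerInf_ne_zero (hq : ‖q‖ < 1) {a : 𝕜} (ha : ∀ j : ℕ, a * q ^ j ≠ 1) :
    qPochhammerInf a q ≠ 0 := by
  simp only [qPochhammerInf, sub_eq_add_neg]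
  refine tprod_one_add_ne_zero_of_summable (fun j ↦ ?_) (summable_norm_neg_mul_pow hq a)
  rw [← sub_eq_add_neg, sub_ne_zero]
  exact (ha j).symm

lemma qPochhammerInf_self_ne_zero (hq : ‖q‖ < 1) : qPochhammerInf q q ≠ 0 :=
  qPochhammerInf_ne_zero hq fun j ↦ by
    rw [← pow_succ']
    exact pow_ne_one_of_norm_lt_one hq j.succ_ne_zero

lemma qPochhammerInf_eq_one_sub_mul (hq : ‖q‖ < 1) (a : 𝕜) :
    qPochhammerInf a q = (1 - a) * qPochhammerInf (a * q) q := by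
  have hshift (j : ℕ) : 1 - a * q ^ (j + 1) = 1 - a * q * q ^ j := by ring
  have hprod := tprod_eq_zero_mul' (f := fun j ↦ 1 - a * q ^ j)
    (by simpa only [hshift] using multipliable_one_sub_mul_pow hq (a * q))
  simpa only [qPochhammerInf, hshift, pow_zero, mul_one] using hprod

lemma qPochhammerInf_mul_qPochhammerInf_neg (hq : ‖q‖ < 1) (a : 𝕜) :
    qPochhammerInf a q * qPochhammerInf (-a) q = qPochhammerInf (a ^ 2) (q ^ 2) := by
  rw [qPochhammerInf, qPochhammerInf, ← (multipliable_one_sub_mul_pow hq a).tprod_mul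
    (multipliable_one_sub_mul_pow hq (-a)), qPochhammerInf]
  exact tprod_congr fun j ↦ by ring

lemma qPochhammerInf_sq_mul_qPochhammerInf_sq (hq : ‖q‖ < 1) (a : 𝕜) :
    qPochhammerInf a (q ^ 2) * qPochhammerInf (a * q) (q ^ 2) = qPochhammerInf a q := by
  have heven (j : ℕ) : 1 - a * (q ^ 2) ^ j = 1 - a * q ^ (2 * j) := by ring
  have hodd (j : ℕ) : 1 - a * q * (q ^ 2) ^ j = 1 - a * q ^ (2 * j + 1) := by ring
  have hq_sq := norm_pow_lt_one hq two_ne_zero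
  have hprod := tprod_even_mul_odd (f := fun j ↦ 1 - a * q ^ j)
    (by simpa only [heven] using multipliable_one_sub_mul_pow hq_sq a)
    (by simpa only [hodd] using multipliable_one_sub_mul_pow hq_sq (a * q))
  simpa only [qPochhammerInf, heven, hodd] using hprod

/- Euler: partitions into odd parts are equinumerous with partitions into distinct parts. -/
lemma qPochhammerInf_sq_mul_qPochhammerInf_neg (hq : ‖q‖ < 1) :
    qPochhammerInf q (q ^ 2) * qPochhammerInf (-q) q = 1 := by
  refine mul_left_cancel₀ (qPochhammerInf_self_ne_zero (norm_pow_lt_one hq two_ne_zero)) ?_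
  calc qPochhammerInf (q ^ 2) (q ^ 2) * (qPochhammerInf q (q ^ 2) * qPochhammerInf (-q) q)
      = qPochhammerInf q (q ^ 2) * qPochhammerInf (q * q) (q ^ 2) * qPochhammerInf (-q) q := by
        rw [← sq]
        ring
    _ = qPochhammerInf (q ^ 2) (q ^ 2) * 1 := by
        rw [qPochhammerInf_sq_mul_qPochhammerInf_sq hq, qPochhammerInf_mul_qPochhammerInf_neg hq,
          mul_one]

lemma tendsto_qBinomial (hq : ‖q‖ < 1) {n k : ℕ → ℕ} (hk : Tendsto k atTop atTop)
    (hnk : Tendsto (fun i ↦ n i - k i) atTop atTop) :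
    Tendsto (fun i ↦ qBinomial q (n i) (k i)) atTop (𝓝 (qPochhammerInf q q)⁻¹) := by
  have hne := qPochhammerInf_self_ne_zero hq
  have hn : Tendsto n atTop atTop := tendsto_atTop_mono (fun i ↦ Nat.sub_le _ _) hnk
  have hlim := tendsto_qPochhammer hq q
  rw [← div_mul_cancel_left₀ hne (qPochhammerInf q q)]
  exact (hlim.comp hn).div ((hlim.comp hk).mul (hlim.comp hnk)) (mul_ne_zero hne hne)

lemma exists_norm_qBinomial_le (hq : ‖q‖ < 1) : ∃ C : ℝ, ∀ n k, ‖qBinomial q n k‖ ≤ C := by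
  have hlim := tendsto_qPochhammer hq q
  obtain ⟨A, hA⟩ := (Metric.isBounded_range_of_tendsto _ hlim).exists_norm_le
  obtain ⟨B, hB⟩ := (Metric.isBounded_range_of_tendsto _
    (hlim.inv₀ (qPochhammerInf_self_ne_zero hq))).exists_norm_le
  rw [Set.forall_mem_range] at hA hB
  have hB_nonneg : 0 ≤ B := (norm_nonneg _).trans (hB 0)
  refine ⟨A * (B * B), fun n k ↦ ?_⟩
  rw [qBinomial, div_eq_mul_inv, mul_inv, norm_mul, norm_mul]
  have hAn := hA n
  have hBk := hB k
  have hBnk := hB (n - k)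
  gcongr
  exact (norm_nonneg _).trans hAn

end InfiniteProducts

section TripleProduct

variable {𝕜 : Type*} [NormedField 𝕜] {q : 𝕜}

lemma summable_norm_mul_pow_pow (hq : ‖q‖ < 1) (z : 𝕜) :
    Summable fun n : ℕ ↦ ‖(q ^ n * z) ^ n‖ := by
  have hsmall : ∀ᶠ n : ℕ in atTop, ‖q ^ n * z‖ ≤ 1 / 2 := by
    have hlim : Tendsto (fun n : ℕ ↦ ‖q ^ n * z‖) atTop (𝓝 0) := by
      simpa using ((tendsto_pow_atTop_nhds_zero_of_norm_lt_one hq).mul_const z).norm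
    exact hlim.eventually_le_const one_half_pos
  refine summable_geometric_two.of_norm_bounded_eventually_nat ?_
  filter_upwards [hsmall] with n hn
  rw [norm_norm, norm_pow]
  exact pow_le_pow_left₀ (norm_nonneg _) hn n

lemma summable_norm_zpow_sq_mul_zpow (hq : ‖q‖ < 1) (z : 𝕜) :
    Summable fun l : ℤ ↦ ‖q ^ (l ^ 2) * z ^ l‖ := by
  have hnat (w : 𝕜) (n : ℕ) : (q ^ n * w) ^ n = q ^ ((n : ℤ) ^ 2) * w ^ (n : ℤ) := by
    rw [mul_pow, ← pow_mul, zpow_natCast, ← sq]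
    norm_cast
  refine Summable.of_nat_of_neg ?_ ?_
  · simpa only [hnat] using summable_norm_mul_pow_pow hq z
  · simpa only [hnat, inv_zpow', neg_sq] using summable_norm_mul_pow_pow hq z⁻¹

variable [CompleteSpace 𝕜]

lemma tendsto_qBinomial_central (hq : ‖q‖ < 1) (l : ℤ) :
    Tendsto (fun n : ℕ ↦ qBinomial q (2 * n) (n + l).toNat) atTop
      (𝓝 (qPochhammerInf q q)⁻¹) := by
  refine tendsto_qBinomial hq ?_ ?_ <;>
  · refine tendsto_atTop_mono (fun n ↦ ?_) (tendsto_sub_atTop_nat l.natAbs)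
    omega

theorem jacobi_triple_product (hq0 : q ≠ 0) (hq : ‖q‖ < 1) {z : 𝕜} (hz : z ≠ 0) :
    ∑' l : ℤ, q ^ (l ^ 2) * z ^ l =
      qPochhammerInf (q ^ 2) (q ^ 2) *
        (qPochhammerInf (-(z * q)) (q ^ 2) * qPochhammerInf (-(z⁻¹ * q)) (q ^ 2)) := by
  have hq_sq := norm_pow_lt_one hq two_ne_zero
  set term : ℕ → ℤ → 𝕜 := fun n l ↦
    q ^ (l ^ 2) * z ^ l * qBinomial (q ^ 2) (2 * n) (n + l).toNat with hterm
  have hfinite (n : ℕ) : ∑' l : ℤ, (Finset.Icc (-(n : ℤ)) n : Set ℤ).indicator (term n) l =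
      qPochhammer (-(z * q)) (q ^ 2) n * qPochhammer (-(z⁻¹ * q)) (q ^ 2) n := by
    rw [← sum_eq_tsum_indicator, ← qPochhammer_mul_qPochhammer_inv_eq_sum hq0
      (fun _ ↦ pow_ne_one_of_norm_lt_one hq) hz]
  have hlimit (l : ℤ) :
      Tendsto (fun n : ℕ ↦ (Finset.Icc (-(n : ℤ)) n : Set ℤ).indicator (term n) l) atTop
        (𝓝 (q ^ (l ^ 2) * z ^ l * (qPochhammerInf (q ^ 2) (q ^ 2))⁻¹)) := by
    refine ((tendsto_qBinomial_central hq_sq l).const_mul _).congr' ?_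
    filter_upwards [eventually_ge_atTop l.natAbs] with n hn
    rw [Set.indicator_of_mem]
    simp only [Finset.coe_Icc, Set.mem_Icc]
    omega
  obtain ⟨C, hC⟩ := exists_norm_qBinomial_le hq_sq
  have hbound (n : ℕ) (l : ℤ) : ‖(Finset.Icc (-(n : ℤ)) n : Set ℤ).indicator (term n) l‖ ≤
      ‖q ^ (l ^ 2) * z ^ l‖ * C := by
    refine (norm_indicator_le_norm_self _ _).trans ?_
    rw [hterm, norm_mul]
    gcongr
    exact hC _ _
  have hdominated := tendsto_tsum_of_dominated_convergence
    ((summable_norm_zpow_sq_mul_zpow hq z).mul_right C) hlimit (Eventually.of_forall hbound)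
  simp only [hfinite, tsum_mul_right] at hdominated
  have hproduct := (tendsto_qPochhammer hq_sq (-(z * q))).mul
    (tendsto_qPochhammer hq_sq (-(z⁻¹ * q)))
  rw [tendsto_nhds_unique hproduct hdominated, mul_comm,
    inv_mul_cancel_right₀ (qPochhammerInf_self_ne_zero hq_sq)]

end TripleProduct

section ThetaFunctions

lemma tsum_one_add_neg_one_zpow_mul {ι κ K : Type*} [DivisionRing K] [TopologicalSpace K]
    [IsTopologicalRing K] [T2Space K] {s : ι → ℤ} {e : κ → ι} (he : Function.Injective e)
    (hrange : ∀ i, Even (s i) ↔ i ∈ Set.range e) (f : ι → K) :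
    ∑' i, (1 + (-1) ^ s i) * f i = 2 * ∑' k, f (e k) := by
  have hsupport : (Function.support fun i ↦ (1 + (-1) ^ s i) * f i) ⊆ Set.range e := by
    intro i hi
    rw [← hrange, ← Int.not_odd_iff_even]
    intro hodd
    simp [hodd.neg_one_zpow] at hi
  rw [← he.tsum_eq hsupport, ← tsum_mul_left]
  refine tsum_congr fun k ↦ ?_
  rw [((hrange _).mpr ⟨k, rfl⟩).neg_one_zpow, one_add_one_eq_two]

variable {𝕜 : Type*} [NormedField 𝕜] {q : 𝕜}

lemma norm_neg_one_zpow_mul (l : ℤ) (x : 𝕜) : ‖(-1) ^ l * x‖ = ‖x‖ := by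
  rw [norm_mul, norm_zpow, norm_neg, norm_one, one_zpow, one_mul]

/- Both sides are twice the sum of `f a * g b` over the pairs `(a, b)` with `a + b + c` even. -/
lemma tsum_mul_tsum_add_eq_two_mul_tsum_shear [CompleteSpace 𝕜] {f g : ℤ → 𝕜}
    (hf : Summable (‖f ·‖)) (hg : Summable (‖g ·‖)) (c : ℤ) :
    (∑' a, f a) * ∑' b, g b + (-1) ^ c * ((∑' a, (-1) ^ a * f a) * ∑' b, (-1) ^ b * g b) =
      2 * ∑' r : ℤ × ℤ, f (2 * r.1 + r.2 + c) * g r.2 := by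
  have hinj : Function.Injective fun r : ℤ × ℤ ↦ (2 * r.1 + r.2 + c, r.2) := fun r r' h ↦ by
    grind
  have hrange (p : ℤ × ℤ) : Even (p.1 + p.2 + c) ↔
      p ∈ Set.range fun r : ℤ × ℤ ↦ (2 * r.1 + r.2 + c, r.2) := by
    constructor
    · rintro ⟨m, hm⟩
      exact ⟨(m - p.2 - c, p.2), Prod.ext (by linarith) rfl⟩
    · rintro ⟨r, rfl⟩
      exact ⟨r.1 + r.2 + c, by ring⟩
  have hf' : Summable fun a ↦ ‖(-1) ^ a * f a‖ := by simpa only [norm_neg_one_zpow_mul] using hf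
  have hg' : Summable fun b ↦ ‖(-1) ^ b * g b‖ := by simpa only [norm_neg_one_zpow_mul] using hg
  rw [← tsum_one_add_neg_one_zpow_mul hinj hrange fun p ↦ f p.1 * g p.2,
    tsum_mul_tsum_of_summable_norm hf hg, tsum_mul_tsum_of_summable_norm hf' hg', ← tsum_mul_left,
    ← (summable_mul_of_summable_norm hf hg).tsum_add
      ((summable_mul_of_summable_norm hf' hg').mul_left _)]
  refine tsum_congr fun p ↦ ?_
  rw [zpow_add₀ (neg_ne_zero.mpr one_ne_zero), zpow_add₀ (neg_ne_zero.mpr one_ne_zero)]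
  ring

lemma tsum_mul_tsum_add_eq_two_mul_tsum_rotate [CompleteSpace 𝕜] {f g : ℤ → 𝕜}
    (hf : Summable (‖f ·‖)) (hg : Summable (‖g ·‖)) (c : ℤ) :
    (∑' a, f a) * ∑' b, g b + (-1) ^ c * ((∑' a, (-1) ^ a * f a) * ∑' b, (-1) ^ b * g b) =
      2 * ∑' r : ℤ × ℤ, f (r.1 + r.2 + c) * g (r.1 - r.2) := by
  let shear : ℤ × ℤ ≃ ℤ × ℤ :=
    { toFun r := (r.2, r.1 - r.2)
      invFun r := (r.1 + r.2, r.1)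
      left_inv r := by simp
      right_inv r := by simp }
  rw [tsum_mul_tsum_add_eq_two_mul_tsum_shear hf hg c, ← shear.tsum_eq]
  congr! 5 with r
  simp only [shear, Equiv.coe_fn_mk]
  ring

/-- Jacobi's theta constant `θ₃(q) = ∑_{l ∈ ℤ} q^{l²}` in the nome `q`; `θ₄(q)` is `θ₃(-q)`. -/
noncomputable def thetaThree (q : 𝕜) : 𝕜 := ∑' l : ℤ, q ^ (l ^ 2)

/-- Jacobi's theta constant `θ₂(q) = ∑_{l ∈ ℤ} q^{(l + 1/2)²}` in the nome `q`, divided by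
`q^{1/4}` to leave integral exponents. -/
noncomputable def thetaTwo (q : 𝕜) : 𝕜 := ∑' l : ℤ, q ^ (l ^ 2 + l)

lemma thetaThree_neg (q : 𝕜) : thetaThree (-q) = ∑' l : ℤ, (-1) ^ l * q ^ (l ^ 2) := by
  refine tsum_congr fun l ↦ ?_
  rw [neg_eq_neg_one_mul, mul_zpow]
  congr 1
  rcases Int.even_or_odd l with hl | hl
  · rw [hl.neg_one_zpow, (hl.pow_of_ne_zero two_ne_zero).neg_one_zpow]
  · rw [hl.neg_one_zpow, hl.pow.neg_one_zpow]

lemma summable_norm_thetaThree (hq : ‖q‖ < 1) : Summable fun l : ℤ ↦ ‖q ^ (l ^ 2)‖ := by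
  simpa only [one_zpow, mul_one] using summable_norm_zpow_sq_mul_zpow hq 1

lemma summable_norm_thetaTwo (hq0 : q ≠ 0) (hq : ‖q‖ < 1) :
    Summable fun l : ℤ ↦ ‖q ^ (l ^ 2 + l)‖ := by
  simpa only [zpow_add₀ hq0] using summable_norm_zpow_sq_mul_zpow hq q

lemma zpow_natCast_mul (q : 𝕜) (n : ℕ) (l : ℤ) : q ^ (n * l) = (q ^ n) ^ l := by
  rw [zpow_mul, zpow_natCast]

variable [CompleteSpace 𝕜]

lemma thetaThree_eq_mul_qPochhammerInf_sq (hq0 : q ≠ 0) (hq : ‖q‖ < 1) :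
    thetaThree q = qPochhammerInf (q ^ 2) (q ^ 2) * qPochhammerInf (-q) (q ^ 2) ^ 2 := by
  have := jacobi_triple_product hq0 hq one_ne_zero
  simpa only [thetaThree, one_zpow, mul_one, inv_one, one_mul, ← sq] using this

lemma thetaTwo_eq_two_mul_qPochhammerInf_sq (hq0 : q ≠ 0) (hq : ‖q‖ < 1) :
    thetaTwo q =
      2 * (qPochhammerInf (q ^ 2) (q ^ 2) * qPochhammerInf (-q ^ 2) (q ^ 2) ^ 2) := by
  have htriple := jacobi_triple_product hq0 hq hq0
  rw [inv_mul_cancel₀ hq0, qPochhammerInf_eq_one_sub_mul (norm_pow_lt_one hq two_ne_zero) (-1)]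
    at htriple
  simp only [thetaTwo, zpow_add₀ hq0, htriple, sub_neg_eq_add, neg_one_mul, ← sq]
  ring

lemma tsum_neg_one_zpow_mul_zpow_sq_add_self (hq0 : q ≠ 0) (hq : ‖q‖ < 1) :
    ∑' l : ℤ, (-1) ^ l * q ^ (l ^ 2 + l) = 0 := by
  have hterm (l : ℤ) : (-1) ^ l * q ^ (l ^ 2 + l) = q ^ (l ^ 2) * (-q) ^ l := by
    rw [neg_eq_neg_one_mul q, mul_zpow, zpow_add₀ hq0]
    ring
  have hone : -((-q)⁻¹ * q) = 1 := by rw [inv_neg, neg_mul, neg_neg, inv_mul_cancel₀ hq0]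
  rw [tsum_congr hterm, jacobi_triple_product hq0 hq (neg_ne_zero.mpr hq0), hone,
    qPochhammerInf_eq_one_sub_mul (norm_pow_lt_one hq two_ne_zero) 1, sub_self, zero_mul,
    mul_zero, mul_zero]

lemma thetaThree_sq_add_thetaThree_neg_sq (hq0 : q ≠ 0) (hq : ‖q‖ < 1) :
    thetaThree q ^ 2 + thetaThree (-q) ^ 2 = 2 * thetaThree (q ^ 2) ^ 2 := by
  have hsum := summable_norm_thetaThree hq
  have hsum_sq := summable_norm_thetaThree (norm_pow_lt_one hq two_ne_zero)
  have hlattice := tsum_mul_tsum_add_eq_two_mul_tsum_rotate hsum hsum 0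
  rw [← thetaThree_neg, ← thetaThree, zpow_zero, one_mul] at hlattice
  rw [sq, sq, sq, hlattice, thetaThree, tsum_mul_tsum_of_summable_norm hsum_sq hsum_sq]
  refine congrArg (2 * ·) (tsum_congr fun r ↦ ?_)
  simp only [← zpow_natCast_mul, ← zpow_add₀ hq0]
  congr 1
  push_cast
  ring

lemma thetaThree_sq_sub_thetaThree_neg_sq (hq0 : q ≠ 0) (hq : ‖q‖ < 1) :
    thetaThree q ^ 2 - thetaThree (-q) ^ 2 = 2 * q * thetaTwo (q ^ 2) ^ 2 := by
  have hsum := summable_norm_thetaThree hq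
  have hsum_sq := summable_norm_thetaTwo (pow_ne_zero 2 hq0) (norm_pow_lt_one hq two_ne_zero)
  have hlattice := tsum_mul_tsum_add_eq_two_mul_tsum_rotate hsum hsum 1
  rw [← thetaThree_neg, ← thetaThree, zpow_one, neg_one_mul, ← sub_eq_add_neg] at hlattice
  rw [sq, sq, sq, hlattice, thetaTwo, tsum_mul_tsum_of_summable_norm hsum_sq hsum_sq, mul_assoc,
    ← tsum_mul_left (a := q)]
  refine congrArg (2 * ·) (tsum_congr fun r ↦ ?_)
  simp only [← zpow_natCast_mul, ← zpow_add₀ hq0, ← zpow_one_add₀ hq0]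
  congr 1
  push_cast
  ring

lemma thetaTwo_sq_eq (hq0 : q ≠ 0) (hq : ‖q‖ < 1) :
    thetaTwo q ^ 2 = 2 * (thetaTwo (q ^ 2) * thetaThree (q ^ 2)) := by
  have hsum := summable_norm_thetaTwo hq0 hq
  have hsum_two := summable_norm_thetaTwo (pow_ne_zero 2 hq0) (norm_pow_lt_one hq two_ne_zero)
  have hsum_three := summable_norm_thetaThree (norm_pow_lt_one hq two_ne_zero)
  have hlattice := tsum_mul_tsum_add_eq_two_mul_tsum_rotate hsum hsum 0
  rw [tsum_neg_one_zpow_mul_zpow_sq_add_self hq0 hq, ← thetaTwo, mul_zero, mul_zero,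
    add_zero] at hlattice
  rw [sq, hlattice, thetaTwo, thetaThree, tsum_mul_tsum_of_summable_norm hsum_two hsum_three]
  refine congrArg (2 * ·) (tsum_congr fun r ↦ ?_)
  simp only [← zpow_natCast_mul, ← zpow_add₀ hq0]
  congr 1
  push_cast
  ring

theorem thetaThree_pow_four (hq0 : q ≠ 0) (hq : ‖q‖ < 1) :
    thetaThree q ^ 4 = thetaThree (-q) ^ 4 + q * thetaTwo q ^ 4 := by
  have hadd := thetaThree_sq_add_thetaThree_neg_sq hq0 hq
  have hsub := thetaThree_sq_sub_thetaThree_neg_sq hq0 hq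
  have hmul := thetaTwo_sq_eq hq0 hq
  calc thetaThree q ^ 4
      = thetaThree (-q) ^ 4 + (thetaThree q ^ 2 + thetaThree (-q) ^ 2) *
          (thetaThree q ^ 2 - thetaThree (-q) ^ 2) := by ring
    _ = thetaThree (-q) ^ 4 + q * (2 * (thetaTwo (q ^ 2) * thetaThree (q ^ 2))) ^ 2 := by
        rw [hadd, hsub]
        ring
    _ = thetaThree (-q) ^ 4 + q * thetaTwo q ^ 4 := by
        rw [← hmul]
        ring

/- The difference of the two `θ₃` products and `q θ₂(q) θ₂(q³)` are both twice the sum of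
`q ^ ((2r + s + 1)² + 3s²)`. -/
theorem thetaThree_mul_thetaThree_cube (hq0 : q ≠ 0) (hq : ‖q‖ < 1) :
    thetaThree q * thetaThree (q ^ 3) =
      thetaThree (-q) * thetaThree (-q ^ 3) + q * (thetaTwo q * thetaTwo (q ^ 3)) := by
  have hq0_cube : q ^ 3 ≠ 0 := pow_ne_zero 3 hq0
  have hq_cube : ‖q ^ 3‖ < 1 := norm_pow_lt_one hq three_ne_zero
  have hthree := tsum_mul_tsum_add_eq_two_mul_tsum_shear (summable_norm_thetaThree hq)
    (summable_norm_thetaThree hq_cube) 1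
  have htwo := tsum_mul_tsum_add_eq_two_mul_tsum_shear (summable_norm_thetaTwo hq0 hq)
    (summable_norm_thetaTwo hq0_cube hq_cube) 0
  rw [← thetaThree_neg, ← thetaThree_neg, ← thetaThree, ← thetaThree, zpow_one, neg_one_mul,
    ← sub_eq_add_neg, sub_eq_iff_eq_add'] at hthree
  rw [tsum_neg_one_zpow_mul_zpow_sq_add_self hq0 hq, ← thetaTwo, ← thetaTwo, zero_mul, mul_zero,
    add_zero] at htwo
  rw [hthree, htwo, mul_left_comm q, ← tsum_mul_left (a := q), ← (Equiv.prodComm ℤ ℤ).tsum_eq]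
  congr 2
  refine tsum_congr fun r ↦ ?_
  simp only [Equiv.prodComm_apply, Prod.fst_swap, Prod.snd_swap, ← zpow_natCast_mul,
    ← zpow_add₀ hq0, ← zpow_one_add₀ hq0]
  congr 1
  push_cast
  ring

end ThetaFunctions

section Schlaefli

section QPochhammer

variable {𝕜 : Type*} [NormedField 𝕜] [CompleteSpace 𝕜] {q : 𝕜}

lemma qPochhammerInf_neg_mul_qPochhammerInf_mul_qPochhammerInf_neg_sq (hq : ‖q‖ < 1) :
    qPochhammerInf (-q) (q ^ 2) * qPochhammerInf q (q ^ 2) * qPochhammerInf (-q ^ 2) (q ^ 2) =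
      1 := by
  have hq_sq := norm_pow_lt_one hq two_ne_zero
  rw [mul_comm (qPochhammerInf (-q) _), qPochhammerInf_mul_qPochhammerInf_neg hq_sq,
    qPochhammerInf_sq_mul_qPochhammerInf_neg hq_sq]

theorem qPochhammerInf_neg_pow_eight (hq0 : q ≠ 0) (hq : ‖q‖ < 1) :
    qPochhammerInf (-q) (q ^ 2) ^ 8 =
      qPochhammerInf q (q ^ 2) ^ 8 + 16 * q * qPochhammerInf (-q ^ 2) (q ^ 2) ^ 8 := by
  have hneg := thetaThree_eq_mul_qPochhammerInf_sq (neg_ne_zero.mpr hq0) (by rwa [norm_neg])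
  rw [neg_neg, neg_sq] at hneg
  have htheta := thetaThree_pow_four hq0 hq
  rw [hneg, thetaThree_eq_mul_qPochhammerInf_sq hq0 hq,
    thetaTwo_eq_two_mul_qPochhammerInf_sq hq0 hq] at htheta
  refine mul_left_cancel₀ (pow_ne_zero 4
    (qPochhammerInf_self_ne_zero (norm_pow_lt_one hq two_ne_zero))) ?_
  linear_combination htheta

theorem qPochhammerInf_neg_sq_mul_cube (hq0 : q ≠ 0) (hq : ‖q‖ < 1) :
    (qPochhammerInf (-q) (q ^ 2) * qPochhammerInf (-q ^ 3) ((q ^ 3) ^ 2)) ^ 2 =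
      (qPochhammerInf q (q ^ 2) * qPochhammerInf (q ^ 3) ((q ^ 3) ^ 2)) ^ 2 +
        4 * q * (qPochhammerInf (-q ^ 2) (q ^ 2) *
          qPochhammerInf (-(q ^ 3) ^ 2) ((q ^ 3) ^ 2)) ^ 2 := by
  have hq0_cube : q ^ 3 ≠ 0 := pow_ne_zero 3 hq0
  have hq_cube : ‖q ^ 3‖ < 1 := norm_pow_lt_one hq three_ne_zero
  have hneg := thetaThree_eq_mul_qPochhammerInf_sq (neg_ne_zero.mpr hq0) (by rwa [norm_neg])
  have hneg_cube :=
    thetaThree_eq_mul_qPochhammerInf_sq (neg_ne_zero.mpr hq0_cube) (by rwa [norm_neg])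
  rw [neg_neg, neg_sq] at hneg hneg_cube
  have htheta := thetaThree_mul_thetaThree_cube hq0 hq
  rw [hneg, hneg_cube, thetaThree_eq_mul_qPochhammerInf_sq hq0 hq,
    thetaThree_eq_mul_qPochhammerInf_sq hq0_cube hq_cube,
    thetaTwo_eq_two_mul_qPochhammerInf_sq hq0 hq,
    thetaTwo_eq_two_mul_qPochhammerInf_sq hq0_cube hq_cube] at htheta
  refine mul_left_cancel₀ (mul_ne_zero
    (qPochhammerInf_self_ne_zero (norm_pow_lt_one hq two_ne_zero))
    (qPochhammerInf_self_ne_zero (norm_pow_lt_one hq_cube two_ne_zero))) ?_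
  linear_combination htheta

end QPochhammer

lemma sixteen_mul_pow_add_pow_eq {R : Type*} [CommRing R] {A A₁ A₂ B B₁ B₂ q : R}
    (hA : A * A₁ * A₂ = 1) (hB : B * B₁ * B₂ = 1)
    (hA_pow : A ^ 8 = A₁ ^ 8 + 16 * q * A₂ ^ 8) (hB_pow : B ^ 8 = B₁ ^ 8 + 16 * q ^ 3 * B₂ ^ 8) :
    16 * q * (B ^ 24 + q ^ 2 * A ^ 24) =
      (A * B) ^ 8 * (((A₁ * B₁) ^ 8 + 256 * q ^ 4 * (A₂ * B₂) ^ 8) *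
        ((A * B) ^ 8 - (A₁ * B₁) ^ 8 - 256 * q ^ 4 * (A₂ * B₂) ^ 8) +
          1024 * q ^ 4 * (A₁ * B₁ * A₂ * B₂) ^ 8) := by
  calc 16 * q * (B ^ 24 + q ^ 2 * A ^ 24)
      = 16 * q * (B ^ 24 * (A * A₁ * A₂) ^ 8 + q ^ 2 * A ^ 24 * (B * B₁ * B₂) ^ 8) := by
        rw [hA, hB, one_pow, mul_one, mul_one]
    _ = (A * B) ^ 8 * (16 * q * (A₁ * A₂) ^ 8 * (B ^ 8) ^ 2 +
          16 * q ^ 3 * (B₁ * B₂) ^ 8 * (A ^ 8) ^ 2) := by ring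
    _ = _ := by
        rw [mul_pow A B, hA_pow, hB_pow]
        ring

/- With `p, w, t` the squares below, `p = w + t` and `p w t = 4 q` turn both sides of the squared
identity into `p⁵ (w² + t²)²`. -/
lemma pow_twelve_add_mul_pow_twelve_eq {A A₁ A₂ B B₁ B₂ q : ℝ} (hq : 0 < q) (hA : 0 ≤ A)
    (hB : 0 ≤ B) (hA_mul : A * A₁ * A₂ = 1) (hB_mul : B * B₁ * B₂ = 1)
    (hA_pow : A ^ 8 = A₁ ^ 8 + 16 * q * A₂ ^ 8) (hB_pow : B ^ 8 = B₁ ^ 8 + 16 * q ^ 3 * B₂ ^ 8)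
    (hAB : (A * B) ^ 2 = (A₁ * B₁) ^ 2 + 4 * q * (A₂ * B₂) ^ 2) :
    B ^ 12 + q * A ^ 12 = (A * B) ^ 9 - 8 * q * (A * B) ^ 3 := by
  obtain ⟨p, hp⟩ : ∃ p, p = (A * B) ^ 2 := ⟨_, rfl⟩
  obtain ⟨w, hw⟩ : ∃ w, w = (A₁ * B₁) ^ 2 := ⟨_, rfl⟩
  obtain ⟨t, ht⟩ : ∃ t, t = 4 * q * (A₂ * B₂) ^ 2 := ⟨_, rfl⟩
  have hp_nonneg : 0 ≤ p := hp ▸ sq_nonneg _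
  have hp_add : p = w + t := by rw [hp, hw, ht, hAB]
  have hp_mul : p * w * t = 4 * q := by
    calc p * w * t = 4 * q * (A * A₁ * A₂) ^ 2 * (B * B₁ * B₂) ^ 2 := by
          rw [hp, hw, ht]
          ring
      _ = 4 * q := by rw [hA_mul, hB_mul, one_pow, mul_one, mul_one]
  have hright : (A * B) ^ 9 - 8 * q * (A * B) ^ 3 = (A * B) ^ 3 * (p * (w ^ 2 + t ^ 2)) := by
    have hp_cube : p ^ 3 - 8 * q = p * (w ^ 2 + t ^ 2) := by
      linear_combination 2 * hp_mul + p * (p + w + t) * hp_add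
    rw [← hp_cube, hp]
    ring
  have hsq : (B ^ 12 + q * A ^ 12) ^ 2 = ((A * B) ^ 3 * (p * (w ^ 2 + t ^ 2))) ^ 2 := by
    refine mul_left_cancel₀ (mul_ne_zero (by norm_num : (16 : ℝ) ≠ 0) hq.ne') ?_
    calc 16 * q * (B ^ 12 + q * A ^ 12) ^ 2
        = 16 * q * (B ^ 24 + q ^ 2 * A ^ 24) + 2 * (4 * q) ^ 2 * ((A * B) ^ 2) ^ 6 := by ring
      _ = p ^ 4 * ((w ^ 4 + t ^ 4) * (p ^ 4 - w ^ 4 - t ^ 4) + 4 * w ^ 4 * t ^ 4) +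
            2 * (p * w * t) ^ 2 * p ^ 6 := by
          rw [sixteen_mul_pow_add_pow_eq hA_mul hB_mul hA_pow hB_pow, hp_mul, hp, hw, ht]
          ring
      _ = 4 * (p * w * t) * (p ^ 3 * (p * (w ^ 2 + t ^ 2)) ^ 2) := by
          rw [hp_add]
          ring
      _ = 16 * q * ((A * B) ^ 3 * (p * (w ^ 2 + t ^ 2))) ^ 2 := by
          rw [hp_mul, mul_pow _ (p * _), ← pow_mul, hp]
          ring
  rw [hright]
  exact (sq_eq_sq₀ (by positivity) (by positivity)).mp hsq

variable {q : ℝ}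

lemma chi_eq_qPochhammerInf (q : ℝ) : chi q = qPochhammerInf (-q) (q ^ 2) :=
  tprod_congr fun m ↦ by ring

lemma norm_lt_one_of_pos_of_lt_one (hq0 : 0 < q) (hq1 : q < 1) : ‖q‖ < 1 := by
  rwa [Real.norm_of_nonneg hq0.le]

lemma one_add_pow_pos (hq : ‖q‖ < 1) {n : ℕ} (hn : n ≠ 0) : 0 < 1 + q ^ n :=
  neg_lt_iff_pos_add'.mp (neg_lt_of_abs_lt (norm_pow_lt_one hq hn))

lemma chi_pos (hq : ‖q‖ < 1) : 0 < chi q := by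
  have hq_sq := norm_pow_lt_one hq two_ne_zero
  have hfactor (j : ℕ) : 0 < 1 - -q * (q ^ 2) ^ j := by
    rw [neg_mul, sub_neg_eq_add, ← pow_mul, ← pow_succ']
    exact one_add_pow_pos hq (2 * j).succ_ne_zero
  rw [chi_eq_qPochhammerInf]
  refine (qPochhammerInf_ne_zero hq_sq fun j ↦ (sub_pos.mp (hfactor j)).ne).lt_of_le' ?_
  exact ge_of_tendsto' (tendsto_qPochhammer hq_sq _) fun n ↦
    Finset.prod_nonneg fun j _ ↦ (hfactor j).le

/- Schläfli's modular equation of degree three. -/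
theorem chi_cube_pow_twelve_add_mul_chi_pow_twelve (hq0 : 0 < q) (hq1 : q < 1) :
    chi (q ^ 3) ^ 12 + q * chi q ^ 12 =
      (chi q * chi (q ^ 3)) ^ 9 - 8 * q * (chi q * chi (q ^ 3)) ^ 3 := by
  have hq := norm_lt_one_of_pos_of_lt_one hq0 hq1
  have hq_cube := norm_pow_lt_one hq three_ne_zero
  have hq0_cube : 0 < q ^ 3 := pow_pos hq0 3
  have hchi := (chi_pos hq).le
  have hchi_cube := (chi_pos hq_cube).le
  rw [chi_eq_qPochhammerInf] at hchi hchi_cube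
  rw [chi_eq_qPochhammerInf, chi_eq_qPochhammerInf]
  exact pow_twelve_add_mul_pow_twelve_eq hq0 hchi hchi_cube
    (qPochhammerInf_neg_mul_qPochhammerInf_mul_qPochhammerInf_neg_sq hq)
    (qPochhammerInf_neg_mul_qPochhammerInf_mul_qPochhammerInf_neg_sq hq_cube)
    (qPochhammerInf_neg_pow_eight hq0.ne' hq) (qPochhammerInf_neg_pow_eight hq0_cube.ne' hq_cube)
    (qPochhammerInf_neg_sq_mul_cube hq0.ne' hq)

end Schlaefli

section PartialFractions

open Complex in
lemma hasSum_one_div_sq_sub_sq {z : ℂ} (hz : z ∈ integerComplement) :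
    HasSum (fun m : ℤ ↦ 1 / (z ^ 2 - m ^ 2)) (Real.pi * cot (Real.pi * z) / z) := by
  have hz0 := integerComplement.ne_zero hz
  have hterm (n : ℕ) : 1 / (z ^ 2 - ((n + 1 : ℤ) : ℂ) ^ 2) = cotTerm z n / (2 * z) := by
    rw [cotTerm_identity hz, mul_div_cancel_left₀ _ (mul_ne_zero two_ne_zero hz0), sq_sub_sq]
    push_cast
    rfl
  have hpos : HasSum (fun n : ℕ ↦ 1 / (z ^ 2 - ((n + 1 : ℤ) : ℂ) ^ 2))
      ((Real.pi * cot (Real.pi * z) - 1 / z) / (2 * z)) := by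
    simp only [hterm, cot_series_rep' hz]
    exact (summable_cotTerm hz).hasSum.div_const (2 * z)
  have hneg : HasSum (fun n : ℕ ↦ 1 / (z ^ 2 - ((-(n + 1 : ℤ) : ℤ) : ℂ) ^ 2))
      ((Real.pi * cot (Real.pi * z) - 1 / z) / (2 * z)) := by
    simpa only [Int.cast_neg, neg_sq] using hpos
  have hvalue : Real.pi * cot (Real.pi * z) / z =
      (Real.pi * cot (Real.pi * z) - 1 / z) / (2 * z) + 1 / (z ^ 2 - ((0 : ℤ) : ℂ) ^ 2) +
        (Real.pi * cot (Real.pi * z) - 1 / z) / (2 * z) := by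
    rw [Int.cast_zero]
    field_simp
    ring
  rw [hvalue]
  exact HasSum.of_add_one_of_neg_add_one (f := fun m : ℤ ↦ 1 / (z ^ 2 - (m : ℂ) ^ 2)) hpos hneg

open Complex in
lemma cot_sub_cot_two_mul {w : ℂ} (hw : sin (2 * w) ≠ 0) :
    cot w - cot (2 * w) = 1 / sin (2 * w) := by
  have hsin : sin w ≠ 0 := fun h ↦ hw (by rw [sin_two_mul, h, mul_zero, zero_mul])
  have hcos : cos w ≠ 0 := fun h ↦ hw (by rw [sin_two_mul, h, mul_zero])
  rw [cot, cot, sin_two_mul, cos_two_mul]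
  field_simp
  ring

open Complex in
lemma tsum_neg_one_zpow_div_sq_sub_sq {z : ℂ} (hz : z ∈ integerComplement) :
    ∑' m : ℤ, (-1) ^ m / (z ^ 2 - m ^ 2) = Real.pi / (z * sin (Real.pi * z)) := by
  have hhalf : z / 2 ∈ integerComplement := by
    rintro ⟨m, hm⟩
    exact hz ⟨2 * m, by push_cast; rw [hm]; ring⟩
  have hsum := hasSum_one_div_sq_sub_sq hz
  have hsum_alt : Summable fun m : ℤ ↦ (-1) ^ m * (1 / (z ^ 2 - m ^ 2)) :=
    .of_norm (by simpa only [norm_neg_one_zpow_mul] using hsum.summable.norm)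
  have heven : ∑' m : ℤ, (1 + (-1) ^ m) * (1 / (z ^ 2 - m ^ 2)) =
      Real.pi * cot (Real.pi * (z / 2)) / z := by
    rw [tsum_one_add_neg_one_zpow_mul (e := fun m : ℤ ↦ 2 * m) (mul_right_injective₀ two_ne_zero)
      (fun m ↦ by simp only [even_iff_exists_two_mul, Set.mem_range, eq_comm])]
    have hterm (m : ℤ) : 1 / (z ^ 2 - ((2 * m : ℤ) : ℂ) ^ 2) =
        1 / 4 * (1 / ((z / 2) ^ 2 - m ^ 2)) := by
      rw [div_mul_div_comm, one_mul]
      push_cast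
      ring
    rw [tsum_congr hterm, tsum_mul_left, (hasSum_one_div_sq_sub_sq hhalf).tsum_eq]
    field_simp
    norm_num
  simp only [add_mul, one_mul] at heven
  rw [hsum.summable.tsum_add hsum_alt, hsum.tsum_eq, ← eq_sub_iff_add_eq'] at heven
  have hdouble : (2 : ℂ) * (Real.pi * (z / 2)) = Real.pi * z := by ring
  have hcot := cot_sub_cot_two_mul (w := Real.pi * (z / 2))
    (by rw [hdouble]; exact sin_pi_mul_ne_zero hz)
  calc ∑' m : ℤ, (-1) ^ m / (z ^ 2 - m ^ 2)
      = Real.pi / z * (cot (Real.pi * (z / 2)) - cot (Real.pi * z)) := by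
        simp only [mul_one_div] at heven
        rw [heven]
        ring
    _ = Real.pi / (z * sin (Real.pi * z)) := by
        rw [← hdouble, hcot, div_mul_div_comm, mul_one]

lemma tsum_neg_one_zpow_div_sq_add_sq {y : ℝ} (hy : y ≠ 0) :
    ∑' m : ℤ, (-1 : ℝ) ^ m / (m ^ 2 + y ^ 2) = Real.pi / (y * Real.sinh (Real.pi * y)) := by
  have hz : (y * Complex.I : ℂ) ∈ Complex.integerComplement := by
    rintro ⟨m, hm⟩
    have him := congrArg Complex.im hm
    simp only [Complex.intCast_im, Complex.mul_I_im, Complex.ofReal_re] at him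
    exact hy him.symm
  have hterm (m : ℤ) : (-1 : ℂ) ^ m / ((y * Complex.I) ^ 2 - m ^ 2) =
      -(((-1 : ℝ) ^ m / (m ^ 2 + y ^ 2) : ℝ) : ℂ) := by
    rw [mul_pow, Complex.I_sq, mul_neg_one, ← neg_add', div_neg]
    push_cast
    rw [add_comm]
  have hsin : y * Complex.I * Complex.sin (Real.pi * (y * Complex.I)) =
      -((y * Real.sinh (Real.pi * y) : ℝ) : ℂ) := by
    rw [← mul_assoc (Real.pi : ℂ), Complex.sin_mul_I]
    push_cast
    linear_combination y * Complex.sinh (Real.pi * y) * Complex.I_sq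
  have hvalue := tsum_neg_one_zpow_div_sq_sub_sq hz
  rw [tsum_congr hterm, tsum_neg, ← Complex.ofReal_tsum, hsin, div_neg, neg_inj] at hvalue
  exact_mod_cast hvalue

lemma tsum_neg_one_zpow_div_mul_sq_add_sq {x c : ℝ} (hx : x ≠ 0) (hc : c ≠ 0) :
    ∑' m : ℤ, (-1 : ℝ) ^ m / ((x * m) ^ 2 + c ^ 2) =
      Real.pi / (x * (c * Real.sinh (Real.pi / x * c))) := by
  have hterm (m : ℤ) : (-1 : ℝ) ^ m / ((x * m) ^ 2 + c ^ 2) =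
      1 / x ^ 2 * ((-1 : ℝ) ^ m / (m ^ 2 + (c / x) ^ 2)) := by
    rw [div_mul_div_comm, one_mul, mul_add, ← mul_pow, ← mul_pow, mul_div_cancel₀ _ hx]
  rw [tsum_congr hterm, tsum_mul_left, tsum_neg_one_zpow_div_sq_add_sq (div_ne_zero hc hx),
    show Real.pi * (c / x) = Real.pi / x * c by ring]
  field_simp

end PartialFractions

section OuterSum

/-- The general term of the double series `log χ(q) = ∑ j, ∑ k, (-1)ᵏ q^((2j+1)(k+1)) / (k+1)`
that arises by expanding each `log (1 + q^(2j+1))`; the pair `(j, k)` is encoded as `p`. -/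
noncomputable def logChiTerm (q : ℝ) (p : ℕ × ℕ) : ℝ :=
  (-1) ^ p.2 / (p.2 + 1) * q ^ ((2 * p.1 + 1) * (p.2 + 1))

variable {q : ℝ}

lemma summable_logChiTerm (hq : ‖q‖ < 1) : Summable (logChiTerm q) := by
  have hgeom := summable_geometric_of_lt_one (norm_nonneg q) hq
  refine (summable_mul_of_summable_norm hgeom.norm hgeom.norm).of_norm_bounded fun p ↦ ?_
  have hcoeff : ‖(-1 : ℝ) ^ p.2 / (p.2 + 1)‖ ≤ 1 := by
    rw [norm_div, norm_pow, norm_neg, norm_one, one_pow, Real.norm_of_nonneg (by positivity),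
      div_le_one (by positivity)]
    exact le_add_of_nonneg_left p.2.cast_nonneg
  calc ‖logChiTerm q p‖
      = ‖(-1 : ℝ) ^ p.2 / (p.2 + 1)‖ * ‖q‖ ^ ((2 * p.1 + 1) * (p.2 + 1)) := by
        rw [logChiTerm, norm_mul, norm_pow]
    _ ≤ 1 * ‖q‖ ^ (p.1 + p.2) :=
        mul_le_mul hcoeff (pow_le_pow_of_le_one (norm_nonneg q) hq.le (by nlinarith))
          (by positivity) zero_le_one
    _ = ‖q‖ ^ p.1 * ‖q‖ ^ p.2 := by rw [one_mul, pow_add]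

lemma hasSum_logChiTerm_left (hq : ‖q‖ < 1) (j : ℕ) :
    HasSum (fun k ↦ logChiTerm q (j, k)) (Real.log (1 + q ^ (2 * j + 1))) := by
  have habs : |-q ^ (2 * j + 1)| < 1 := by
    rw [abs_neg]
    exact norm_pow_lt_one hq (2 * j).succ_ne_zero
  have hlog := (Real.hasSum_pow_div_log_of_abs_lt_one habs).neg
  rw [neg_neg, sub_neg_eq_add] at hlog
  refine hlog.congr_fun fun k ↦ ?_
  rw [logChiTerm, neg_pow (q ^ _), pow_succ (-1 : ℝ), pow_mul]
  ring

lemma hasSum_logChiTerm_right (hq : ‖q‖ < 1) (k : ℕ) :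
    HasSum (fun j ↦ logChiTerm q (j, k))
      ((-1) ^ k / (k + 1) * (q ^ (k + 1) / (1 - q ^ (2 * (k + 1))))) := by
  have hnorm : ‖q ^ (2 * (k + 1))‖ < 1 := norm_pow_lt_one hq (by positivity)
  refine (((hasSum_geometric_of_norm_lt_one hnorm).mul_left (q ^ (k + 1))).mul_left
    ((-1 : ℝ) ^ k / (k + 1))).congr_fun fun j ↦ ?_
  rw [logChiTerm, ← pow_mul, ← pow_add]
  congr 2
  ring

lemma hasSum_log_chi (hq : ‖q‖ < 1) :
    HasSum (fun k : ℕ ↦ (-1) ^ k / (k + 1) * (q ^ (k + 1) / (1 - q ^ (2 * (k + 1)))))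
      (Real.log (chi q)) := by
  have hsum := (summable_logChiTerm hq).hasSum
  have hchi : chi q = Real.exp (∑' p, logChiTerm q p) :=
    (Real.hasProd_of_hasSum_log (fun j ↦ one_add_pow_pos hq (2 * j).succ_ne_zero)
      (hsum.prod_fiberwise (hasSum_logChiTerm_left hq))).tprod_eq
  rw [hchi, Real.log_exp]
  exact ((Equiv.prodComm ℕ ℕ).hasSum_iff.mpr hsum).prod_fiberwise (hasSum_logChiTerm_right hq)

lemma exp_neg_div_one_sub_exp_neg_sq (s : ℝ) :
    Real.exp (-s) / (1 - Real.exp (-s) ^ 2) = 1 / (2 * Real.sinh s) := by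
  have hfactor : 1 - Real.exp (-s) ^ 2 = Real.exp (-s) * (2 * Real.sinh s) := by
    rw [Real.sinh_eq, mul_div_cancel₀ _ two_ne_zero, mul_sub, ← Real.exp_add, neg_add_cancel,
      Real.exp_zero, sq]
  rw [hfactor, div_mul_cancel_left₀ (Real.exp_ne_zero _), one_div]

lemma even_neg_one_zpow_div_mul_sinh (t : ℝ) :
    (fun k : ℤ ↦ (-1 : ℝ) ^ (k + 1) / (k * Real.sinh (t * k))).Even := fun k ↦ by
  have hsign : (-1 : ℝ) ^ (-k + 1) = (-1) ^ (k + 1) := by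
    rw [zpow_add₀ (by norm_num), zpow_add₀ (by norm_num), zpow_neg, ← inv_zpow, inv_neg_one]
  simp only [hsign, Int.cast_neg, mul_neg, neg_mul, Real.sinh_neg, neg_neg]

/- The term at `k = 0` vanishes because `x / 0 = 0`. -/
lemma hasSum_neg_one_zpow_div_mul_sinh {t : ℝ} (ht : 0 < t) :
    HasSum (fun k : ℤ ↦ (-1 : ℝ) ^ (k + 1) / (k * Real.sinh (t * k)))
      (4 * Real.log (chi (Real.exp (-t)))) := by
  have hq : ‖Real.exp (-t)‖ < 1 := norm_lt_one_of_pos_of_lt_one (Real.exp_pos _)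
    (Real.exp_lt_one_iff.mpr (neg_lt_zero.mpr ht))
  have hpos : HasSum (fun n : ℕ ↦ (-1 : ℝ) ^ ((n + 1 : ℤ) + 1) /
      ((n + 1 : ℤ) * Real.sinh (t * (n + 1 : ℤ)))) (2 * Real.log (chi (Real.exp (-t)))) := by
    refine ((hasSum_log_chi hq).mul_left 2).congr_fun fun n ↦ ?_
    have hexp : Real.exp (-t) ^ (n + 1) = Real.exp (-(t * (n + 1 : ℤ))) := by
      rw [← Real.exp_nat_mul]
      push_cast
      ring_nf
    have hsign : (-1 : ℝ) ^ ((n + 1 : ℤ) + 1) = (-1) ^ n := by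
      rw [add_assoc, zpow_add₀ (by norm_num), zpow_natCast]
      norm_num
    rw [mul_comm 2 (n + 1), pow_mul, hexp, exp_neg_div_one_sub_exp_neg_sq, hsign]
    push_cast
    field_simp
  have hneg : HasSum (fun n : ℕ ↦ (-1 : ℝ) ^ (-(n + 1 : ℤ) + 1) /
      ((-(n + 1 : ℤ) : ℤ) * Real.sinh (t * (-(n + 1 : ℤ) : ℤ))))
      (2 * Real.log (chi (Real.exp (-t)))) :=
    hpos.congr_fun fun n ↦ even_neg_one_zpow_div_mul_sinh t (n + 1)
  convert HasSum.of_add_one_of_neg_add_one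
    (f := fun k : ℤ ↦ (-1 : ℝ) ^ (k + 1) / (k * Real.sinh (t * k))) hpos hneg using 1
  simp only [Int.cast_zero, zero_mul, div_zero]
  ring

lemma hasSum_three_mul_add_one_of_even {f : ℤ → ℝ} {a b : ℝ} (heven : f.Even)
    (hf : HasSum f a) (hf₀ : HasSum (fun n ↦ f (3 * n)) b) :
    HasSum (fun n ↦ f (3 * n + 1)) ((a - b) / 2) := by
  have hinj : Function.Injective fun n : ℤ ↦ 3 * n + 1 := fun m n h ↦ by simpa using h
  obtain ⟨c, hf₁⟩ := hf.summable.comp_injective hinj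
  have hf₂ : HasSum (fun n ↦ f (3 * n + 2)) c := by
    refine ((Equiv.subLeft (-1 : ℤ)).hasSum_iff.mpr hf₁).congr_fun fun n ↦ ?_
    simp only [Function.comp_apply, Equiv.subLeft_apply]
    rw [← heven]
    ring_nf
  have hfibre : ∀ r : Fin 3, HasSum (fun n ↦ f (3 * n + r)) (![b, c, c] r) :=
    Fin.forall_fin_succ.mpr ⟨by simpa using hf₀, Fin.forall_fin_two.mpr ⟨hf₁, hf₂⟩⟩
  have hpairs : HasSum (fun p : Fin 3 × ℤ ↦ f (3 * p.2 + p.1)) a := by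
    refine (((Equiv.prodComm _ _).trans (Int.divModEquiv 3).symm).hasSum_iff.mpr hf).congr_fun
      fun p ↦ ?_
    simp [mul_comm]
  have hsum : a = b + c + c := by
    rw [(hpairs.prod_fiberwise hfibre).unique (hasSum_fintype ![b, c, c]), Fin.sum_univ_three]
    rfl
  rwa [show (a - b) / 2 = c by rw [hsum]; ring]

lemma hasSum_neg_one_zpow_div_three_mul_add_one_mul_sinh {t : ℝ} (ht : 0 < t) :
    HasSum (fun n : ℤ ↦ (-1 : ℝ) ^ n / ((3 * n + 1) * Real.sinh (t * (3 * n + 1))))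
      (2 * (Real.log (chi (Real.exp (-t))) - Real.log (chi (Real.exp (-t) ^ 3)) / 3)) := by
  have hsign_three (n : ℤ) : (-1 : ℝ) ^ (3 * n) = (-1) ^ n := by
    rw [zpow_mul]
    norm_num
  have hmultiples : HasSum
      (fun n : ℤ ↦ (-1 : ℝ) ^ (3 * n + 1) / ((3 * n : ℤ) * Real.sinh (t * (3 * n : ℤ))))
      (1 / 3 * (4 * Real.log (chi (Real.exp (-t) ^ 3)))) := by
    have hexp : Real.exp (-t) ^ 3 = Real.exp (-(3 * t)) := by
      rw [← Real.exp_nat_mul]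
      push_cast
      ring_nf
    rw [hexp]
    refine ((hasSum_neg_one_zpow_div_mul_sinh (mul_pos three_pos ht)).mul_left
      (1 / 3)).congr_fun fun n ↦ ?_
    rw [zpow_add₀ (by norm_num), zpow_add₀ (by norm_num), hsign_three, Int.cast_mul,
      div_mul_div_comm]
    push_cast
    ring_nf
  convert hasSum_three_mul_add_one_of_even (even_neg_one_zpow_div_mul_sinh t)
    (hasSum_neg_one_zpow_div_mul_sinh ht) hmultiples using 1
  · ext n
    have hsign : (-1 : ℝ) ^ (3 * n + 1 + 1) = (-1) ^ n := by
      rw [add_assoc, zpow_add₀ (by norm_num), hsign_three]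
      norm_num
    rw [hsign]
    push_cast
    rfl
  · ring

end OuterSum

section Evaluation

variable {q : ℝ}

lemma one_add_cube_div_one_sub_eight_mul_cube_eq (hq0 : 0 < q) (hq1 : q < 1) {u : ℝ}
    (hu : u = -(q ^ ((1 : ℝ) / 3)) * chi q / (chi (q ^ 3)) ^ 3) :
    (1 + u ^ 3) / (1 - 8 * u ^ 3) = chi (q ^ 3) ^ 3 / chi q ^ 9 := by
  have hq_norm := norm_lt_one_of_pos_of_lt_one hq0 hq1
  have hchi := chi_pos hq_norm
  have hchi_cube := chi_pos (norm_pow_lt_one hq_norm three_ne_zero)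
  have hcube : (q ^ ((1 : ℝ) / 3)) ^ 3 = q := by
    rw [← Real.rpow_mul_natCast hq0.le]
    norm_num
  have hu_cube : u ^ 3 = -(q * chi q ^ 3 / chi (q ^ 3) ^ 9) := by
    rw [hu, div_pow, mul_pow, neg_pow, hcube]
    ring
  have hdenom : 1 - 8 * u ^ 3 ≠ 0 := by
    have hpos : 0 < q * chi q ^ 3 / chi (q ^ 3) ^ 9 := by positivity
    linarith
  rw [div_eq_div_iff hdenom (by positivity), hu_cube]
  field_simp
  linear_combination -chi_cube_pow_twelve_add_mul_chi_pow_twelve hq0 hq1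

lemma tsum_neg_one_zpow_div_eq_mul_div_sinh {x : ℝ} (hx : x ≠ 0) (n : ℤ) :
    ∑' m : ℤ, (-1 : ℝ) ^ (m + n) / ((x * m) ^ 2 + (3 * (n : ℝ) + 1) ^ 2) =
      Real.pi / x * ((-1) ^ n / ((3 * n + 1) * Real.sinh (Real.pi / x * (3 * n + 1)))) := by
  have hc : 3 * (n : ℝ) + 1 ≠ 0 := by
    exact_mod_cast (by omega : 3 * n + 1 ≠ 0)
  have hterm (m : ℤ) : (-1 : ℝ) ^ (m + n) / ((x * m) ^ 2 + (3 * (n : ℝ) + 1) ^ 2) =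
      (-1) ^ n * ((-1) ^ m / ((x * m) ^ 2 + (3 * (n : ℝ) + 1) ^ 2)) := by
    rw [add_comm, zpow_add₀ (by norm_num), mul_div_assoc]
  rw [tsum_congr hterm, tsum_mul_left, tsum_neg_one_zpow_div_mul_sq_add_sq hx hc]
  field_simp

end Evaluation

/-- For real `x > 0`, with `q = e^{-π/x}` and `u = -q^{1/3} χ(q)/χ³(q³)`,
`F_{(3,1)}(x) = -(2π/(9x)) log((1 + u³)/(1 - 8u³))`. -/
theorem F31_evaluation (x : ℝ) (hx : 0 < x) (q u : ℝ)
    (hq : q = Real.exp (-Real.pi / x))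
    (hu : u = -(q ^ ((1 : ℝ) / 3)) * chi q / (chi (q ^ 3)) ^ 3) :
    Tendsto (fun N : ℕ => ∑ n ∈ Finset.Ioo (-(N : ℤ)) (N : ℤ),
        ∑' m : ℤ, (-1 : ℝ) ^ (m + n) / ((x * m) ^ 2 + (3 * (n : ℝ) + 1) ^ 2))
      atTop
      (nhds (-(2 * Real.pi / (9 * x)) * Real.log ((1 + u ^ 3) / (1 - 8 * u ^ 3)))) := by
  have ht : 0 < Real.pi / x := div_pos Real.pi_pos hx
  rw [neg_div] at hq
  have hq0 : 0 < q := hq ▸ Real.exp_pos _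
  have hq1 : q < 1 := hq ▸ Real.exp_lt_one_iff.mpr (neg_lt_zero.mpr ht)
  have hq_norm := norm_lt_one_of_pos_of_lt_one hq0 hq1
  have hchi := chi_pos hq_norm
  have hchi_cube := chi_pos (norm_pow_lt_one hq_norm three_ne_zero)
  have hvalue : -(2 * Real.pi / (9 * x)) * Real.log ((1 + u ^ 3) / (1 - 8 * u ^ 3)) =
      Real.pi / x * (2 * (Real.log (chi q) - Real.log (chi (q ^ 3)) / 3)) := by
    rw [one_add_cube_div_one_sub_eight_mul_cube_eq hq0 hq1 hu,
      Real.log_div (by positivity) (by positivity), Real.log_pow, Real.log_pow]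
    push_cast
    ring
  have hsum := (hasSum_neg_one_zpow_div_three_mul_add_one_mul_sinh ht).mul_left (Real.pi / x)
  rw [← hq, ← hvalue] at hsum
  simp only [tsum_neg_one_zpow_div_eq_mul_div_sinh hx.ne']
  exact hsum.comp (Finset.tendsto_Ioo_neg_atTop_atTop.comp tendsto_natCast_atTop_atTop)
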